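/- Let R be a basic left Harada algebra with modules P_{ij} := rad^{j-1}(e_{i1}R) as below, and let f : P_{ij} → P_{il} be an injective homomorphism of right R-modules with j ≥ l. Then for every homomorphism g : P_{il'} → P_{il} with l' ≥ j, there exists a homomorphism h : P_{il'} → P_{ij} such that g = f ∘ h. -/

import Mathlib

/-!
Common setup.  `K` is an algebraically closed field and `R` a finite-dimensional associative
unital `K`-algebra.  Right `R`-modules are formalized as modules over the opposite ring `Rᵐᵒᵖ`
(so that `MulOpposite.op r • x = x * r`).
-/

open MulOpposite

/-- The right ideal `xR` of a ring `R`, as a submodule of `R` over `Rᵐᵒᵖ`. -/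
def rightIdeal (R : Type) [Ring R] (x : R) : Submodule Rᵐᵒᵖ R :=
  Submodule.span Rᵐᵒᵖ {x}

/-- The Jacobson radical of a submodule `N` (the intersection of the maximal submodules of the
module `N`), viewed as a submodule of the ambient module.  Iterating this operation gives the
iterated radicals `rad^k`. -/
def radSub {A M : Type} [Ring A] [AddCommGroup M] [Module A M] (N : Submodule A M) :
    Submodule A M :=
  Submodule.map N.subtype (sInf {P : Submodule A ↥N | IsCoatom P})

/-- A module is indecomposable if it is nonzero and admits no nontrivial direct sum
decomposition. -/
def IsIndecomposableMod (A M : Type) [Ring A] [AddCommGroup M] [Module A M] : Prop :=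
  Nontrivial M ∧ ∀ N N' : Submodule A M, IsCompl N N' → N = ⊥ ∨ N' = ⊥

/-- A module has projective dimension at most one iff it admits a surjection from a projective
module with projective kernel. -/
def PdLeOne (A : Type) [Ring A] (M : Type) [AddCommGroup M] [Module A M] : Prop :=
  ∃ (P : ModuleCat.{0} A) (f : ↥P →ₗ[A] M),
    Module.Projective A ↥P ∧ Function.Surjective f ∧
      Module.Projective A ↥(LinearMap.ker f)

/-- `Ext¹_A(M,N) = 0`, expressed by the splitting of every short exact sequence
`0 → N → E → M → 0`. -/
def Ext1Zero (A : Type) [Ring A] (M N : Type) [AddCommGroup M] [Module A M]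
    [AddCommGroup N] [Module A N] : Prop :=
  ∀ (E : ModuleCat.{0} A) (i : N →ₗ[A] ↥E) (p : ↥E →ₗ[A] M),
    Function.Injective i → Function.Surjective p → LinearMap.range i = LinearMap.ker p →
    ∃ s : M →ₗ[A] ↥E, p.comp s = LinearMap.id

/-- `X ∈ add T` : `X` is a direct summand of a finite direct sum of copies of `T`. -/
def InAdd (A : Type) [Ring A] (T X : Type) [AddCommGroup T] [Module A T]
    [AddCommGroup X] [Module A X] : Prop :=
  ∃ (k : ℕ) (f : X →ₗ[A] (Fin k → T)) (g : (Fin k → T) →ₗ[A] X),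
    g.comp f = LinearMap.id

/-- `T` is a (finitely generated) tilting right `R`-module: projective dimension at most one,
no self-extensions, and there is a short exact sequence `0 → R → T₀ → T₁ → 0` with
`T₀, T₁ ∈ add T`. -/
def IsTiltingRight (R : Type) [Ring R] (T : Type) [AddCommGroup T] [Module Rᵐᵒᵖ T] : Prop :=
  Module.Finite Rᵐᵒᵖ T ∧ PdLeOne Rᵐᵒᵖ T ∧ Ext1Zero Rᵐᵒᵖ T T ∧
    ∃ (T₀ T₁ : ModuleCat.{0} Rᵐᵒᵖ) (f : R →ₗ[Rᵐᵒᵖ] ↥T₀) (g : ↥T₀ →ₗ[Rᵐᵒᵖ] ↥T₁),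
      InAdd Rᵐᵒᵖ T ↥T₀ ∧ InAdd Rᵐᵒᵖ T ↥T₁ ∧
        Function.Injective f ∧ Function.Surjective g ∧ LinearMap.range f = LinearMap.ker g

/-- `T` is basic: it is an (internal) direct sum of pairwise non-isomorphic indecomposable
submodules. -/
def IsBasicMod (A : Type) [Ring A] (T : Type) [AddCommGroup T] [Module A T] : Prop :=
  ∃ (k : ℕ) (N : Fin k → Submodule A T),
    DirectSum.IsInternal N ∧ (∀ a, IsIndecomposableMod A ↥(N a)) ∧
      ∀ a b, a ≠ b → IsEmpty (↥(N a) ≃ₗ[A] ↥(N b))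

/-- The setoid identifying isomorphic modules (among those with property `P`). -/
def isoSetoid (A : Type) [Ring A] (P : ModuleCat.{0} A → Prop) :
    Setoid {M : ModuleCat.{0} A // P M} where
  r M N := Nonempty (↥M.1 ≃ₗ[A] ↥N.1)
  iseqv := ⟨fun M => ⟨LinearEquiv.refl A ↥M.1⟩, fun ⟨e⟩ => ⟨e.symm⟩,
    fun ⟨e⟩ ⟨f⟩ => ⟨e.trans f⟩⟩

/-- The data exhibiting a ring `R` as a basic left Harada algebra:
a complete set `{e i j}` of orthogonal primitive idempotents with pairwise non-isomorphic
right ideals `(e i j)R` (`R` is basic), such that each `(e i 0)R` is an injective right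
module, and `(e i j)R ≅ rad ((e i (j-1))R)` for `j ≥ 1`.  (Indices are shifted by one from
the paper: the paper's `e_{ij}` is `e i (j-1)` here.) -/
structure HaradaData (R : Type) [Ring R] : Type where
  m : ℕ
  hm : 0 < m
  n : Fin m → ℕ
  hn : ∀ i, 0 < n i
  e : (i : Fin m) → Fin (n i) → R
  idem : ∀ i j, IsIdempotentElem (e i j)
  orth : ∀ p q : Σ i : Fin m, Fin (n i), p ≠ q → e p.1 p.2 * e q.1 q.2 = 0
  sum_eq_one : ∑ p : Σ i : Fin m, Fin (n i), e p.1 p.2 = 1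
  indec : ∀ i j, IsIndecomposableMod Rᵐᵒᵖ ↥(rightIdeal R (e i j))
  basic : ∀ p q : Σ i : Fin m, Fin (n i), p ≠ q →
    IsEmpty (↥(rightIdeal R (e p.1 p.2)) ≃ₗ[Rᵐᵒᵖ] ↥(rightIdeal R (e q.1 q.2)))
  inj : ∀ i, Module.Injective Rᵐᵒᵖ ↥(rightIdeal R (e i ⟨0, hn i⟩))
  rad_iso : ∀ (i : Fin m) (j : Fin (n i)), 0 < j.val →
    Nonempty (↥(rightIdeal R (e i j)) ≃ₗ[Rᵐᵒᵖ]
      ↥(radSub (rightIdeal R (e i ⟨j.val - 1, Nat.lt_of_le_of_lt (Nat.sub_le j.val 1) j.isLt⟩))))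

variable {R : Type} [Ring R]

/-- `H.P i j = rad^j ((e i 0)R)`; this is the paper's `P_{i,j+1} = rad^j (e_{i1}R)`,
a submodule of `R`. -/
def HaradaData.P (H : HaradaData R) (i : Fin H.m) (j : Fin (H.n i)) : Submodule Rᵐᵒᵖ R :=
  radSub^[j.val] (rightIdeal R (H.e i ⟨0, H.hn i⟩))

/-- The quotient module `P_{ik}/P_{il}` (for `l ≥ k` we have `H.P i l ≤ H.P i k`). -/
abbrev HaradaData.Quot (H : HaradaData R) (i : Fin H.m) (k l : Fin (H.n i)) : Type :=
  ↥(H.P i k) ⧸ Submodule.comap (H.P i k).subtype (H.P i l)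

/-- The last index (the paper's `n_i`) in `Fin (H.n i)`. -/
def HaradaData.last (H : HaradaData R) (i : Fin H.m) : Fin (H.n i) :=
  ⟨H.n i - 1, Nat.sub_lt (H.hn i) one_pos⟩

/-- The right ideal `I = ⊕_{i,j} rad^{n_i - j + 1}(e_{ij}R)` of the paper. -/
def HaradaData.I (H : HaradaData R) : Submodule Rᵐᵒᵖ R :=
  ⨆ p : Σ i : Fin H.m, Fin (H.n i),
    radSub^[H.n p.1 - p.2.val] (rightIdeal R (H.e p.1 p.2))

/-- The submodule `T·I` of a right module `T`, for `I` a right ideal of `R`. -/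
def smulSub (I : Submodule Rᵐᵒᵖ R) (T : Type) [AddCommGroup T] [Module Rᵐᵒᵖ T] :
    Submodule Rᵐᵒᵖ T :=
  Submodule.span Rᵐᵒᵖ {x : T | ∃ (t : T) (r : R), r ∈ I ∧ x = op r • t}

/-!
A homomorphism into the injective module `E = e_{i1}R` extends to all of `R`, and homomorphisms
carry `rad^k` into `rad^k`; so every homomorphism `P_{ik} → E` has its image in `P_{ik}`. An
injective `f : P_{ij} → P_{il}` is therefore an injective endomorphism of the Artinian module
`P_{ij}`, so its image is exactly `P_{ij}`. The image of `g` lies in `P_{il'} ≤ P_{ij}`, and `g`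
factors through `f`.
-/

theorem range_eq_of_injective_of_range_le {A M : Type*} [Ring A] [AddCommGroup M] [Module A M]
    {U : Submodule A M} [IsArtinian A U] {f : U →ₗ[A] M} (hf : Function.Injective f)
    (hfU : LinearMap.range f ≤ U) : LinearMap.range f = U := by
  refine le_antisymm hfU fun x hx => ?_
  let endo : U →ₗ[A] U := f.codRestrict U fun y => hfU ⟨y, rfl⟩
  have endo_injective : Function.Injective endo := fun _ _ h => hf (congrArg Subtype.val h)
  obtain ⟨y, hy⟩ := IsArtinian.surjective_of_injective_endomorphism endo endo_injective ⟨x, hx⟩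
  exact ⟨y, congrArg Subtype.val hy⟩

theorem exists_eq_comp_of_range_le {A L M N : Type*} [Semiring A] [AddCommMonoid L]
    [AddCommMonoid M] [AddCommMonoid N] [Module A L] [Module A M] [Module A N] {f : M →ₗ[A] N}
    (hf : Function.Injective f) {g : L →ₗ[A] N} (hgf : LinearMap.range g ≤ LinearMap.range f) :
    ∃ h : L →ₗ[A] M, g = f.comp h := by
  refine ⟨(LinearEquiv.ofInjective f hf).symm ∘ₗ
    g.codRestrict (LinearMap.range f) fun x => hgf ⟨x, rfl⟩, ?_⟩
  ext x
  simp

theorem isArtinian_mulOpposite_of_finiteDimensional (K S : Type*) [Field K] [Ring S] [Algebra K S]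
    [FiniteDimensional K S] : IsArtinian Sᵐᵒᵖ S :=
  isArtinian_of_tower K inferInstance

section Radical

variable {A M M' : Type} [Ring A] [AddCommGroup M] [Module A M] [AddCommGroup M'] [Module A M']

theorem radSub_le (N : Submodule A M) : radSub N ≤ N :=
  Submodule.map_subtype_le _ _

theorem iterate_radSub_antitone (N : Submodule A M) : Antitone fun k : ℕ => radSub^[k] N :=
  antitone_nat_of_succ_le fun k => by
    simpa only [Function.iterate_succ_apply'] using radSub_le (radSub^[k] N)

theorem iterate_radSub_le (k : ℕ) (N : Submodule A M) : radSub^[k] N ≤ N :=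
  iterate_radSub_antitone N k.zero_le

theorem radSub_le_comap {φ : M →ₗ[A] M'} {N : Submodule A M} {N' : Submodule A M'}
    (hφ : N ≤ N'.comap φ) : radSub N ≤ (radSub N').comap φ := by
  rintro _ ⟨x, hx, rfl⟩
  exact ⟨φ.restrict hφ x, Module.le_comap_jacobson (φ.restrict hφ) hx, rfl⟩

theorem iterate_radSub_le_comap {φ : M →ₗ[A] M'} {N : Submodule A M} {N' : Submodule A M'}
    (hφ : N ≤ N'.comap φ) (k : ℕ) : radSub^[k] N ≤ (radSub^[k] N').comap φ := by
  induction k with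
  | zero => exact hφ
  | succ k ih => simpa only [Function.iterate_succ_apply'] using radSub_le_comap ih

theorem range_le_iterate_radSub_of_range_le {N : Submodule A M} {E : Submodule A M'}
    [Module.Injective A E] {k : ℕ} {u : ↥(radSub^[k] N) →ₗ[A] M'}
    (hu : LinearMap.range u ≤ E) : LinearMap.range u ≤ radSub^[k] E := by
  rintro _ ⟨x, rfl⟩
  obtain ⟨φ, hφ⟩ := Module.Injective.out (radSub^[k] N).subtype Subtype.val_injective
    (u.codRestrict E fun y => hu ⟨y, rfl⟩)
  have hNE : N ≤ E.comap (E.subtype ∘ₗ φ) := fun y _ => (φ y).2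
  have extension_apply : (φ x : M') = u x := congrArg Subtype.val (hφ x)
  exact extension_apply ▸ iterate_radSub_le_comap hNE k x.2

theorem statement7_general {E V : Submodule A M} [Module.Injective A E] [IsArtinian A E]
    (hVE : V ≤ E) {j l' : ℕ} (hl' : j ≤ l') {f : ↥(radSub^[j] E) →ₗ[A] V}
    (hf : Function.Injective f) (g : ↥(radSub^[l'] E) →ₗ[A] V) :
    ∃ h : ↥(radSub^[l'] E) →ₗ[A] ↥(radSub^[j] E), g = f.comp h := by
  have : IsArtinian A ↥(radSub^[j] E) := isArtinian_of_le (iterate_radSub_le j E)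
  have range_subtype_comp_le {k : ℕ} (u : ↥(radSub^[k] E) →ₗ[A] V) :
      LinearMap.range (V.subtype ∘ₗ u) ≤ radSub^[k] E :=
    range_le_iterate_radSub_of_range_le <| by
      rintro _ ⟨x, rfl⟩
      exact hVE (u x).2
  have range_f : LinearMap.range (V.subtype ∘ₗ f) = radSub^[j] E :=
    range_eq_of_injective_of_range_le (Subtype.val_injective.comp hf) (range_subtype_comp_le f)
  have range_g_le : LinearMap.range (V.subtype ∘ₗ g) ≤ LinearMap.range (V.subtype ∘ₗ f) :=
    ((range_subtype_comp_le g).trans (iterate_radSub_antitone E hl')).trans_eq range_f.symm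
  refine exists_eq_comp_of_range_le hf ?_
  rwa [LinearMap.range_comp, LinearMap.range_comp,
    Submodule.map_le_map_iff_of_injective V.subtype_injective] at range_g_le

end Radical

/-- Lemma 2.3(3).  Let `f : P_{ij} → P_{il}` be injective, `j ≥ l`.  Every
`g : P_{il'} → P_{il}` with `l' ≥ j` factors as `g = f ∘ h`. -/
theorem statement7 (K R : Type) [Field K] [IsAlgClosed K] [Ring R] [Algebra K R]
    [FiniteDimensional K R] (H : HaradaData R) (i : Fin H.m) (j l l' : Fin (H.n i))
    (f : ↥(H.P i j) →ₗ[Rᵐᵒᵖ] ↥(H.P i l)) (hf : Function.Injective f) (hjl : l ≤ j)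
    (g : ↥(H.P i l') →ₗ[Rᵐᵒᵖ] ↥(H.P i l)) (hl' : j ≤ l') :
    ∃ h : ↥(H.P i l') →ₗ[Rᵐᵒᵖ] ↥(H.P i j), g = f.comp h := by
  have := H.inj i
  have := isArtinian_mulOpposite_of_finiteDimensional K R
  exact statement7_general (iterate_radSub_le l _) hl' hf g
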